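/- Let α > 0 and h_α(e^{iθ}) = exp( −α(1−e^{iθ})/(2(1+e^{iθ})) ) for θ ≠ π (a unimodular function on T). If A is a bounded linear operator on ℓ²(ℕ) with ⟨e_j, A e_k⟩ = [h_α]_{j+k+1} for all j,k ≥ 0 (i.e. A = H(h_α)), then A³ = A; in particular A² is idempotent. -/

import Mathlib

open Filter MeasureTheory
open scoped InnerProductSpace

noncomputable section

/-- ℓ²(ℕ) over ℂ. -/
abbrev l2 : Type := lp (fun _ : ℕ => ℂ) 2

/-- The `k`-th Fourier coefficient of a function on the unit circle, given as a
`2π`-periodic function of the angle: `a_k = (1/(2π)) ∫_0^{2π} f(θ) e^{-ikθ} dθ`. -/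
def fc (f : ℝ → ℂ) (k : ℤ) : ℂ :=
  ((1 / (2 * Real.pi) : ℝ) : ℂ) *
    ∫ θ in (0:ℝ)..(2 * Real.pi), f θ * Complex.exp (-(Complex.I * k * θ))

/-- The standard orthonormal basis vector `e_j` of ℓ²(ℕ). -/
def ee (j : ℕ) : l2 := lp.single 2 j 1

/-- Matrix entry `⟨e_j, A e_k⟩` of an operator on ℓ²(ℕ). -/
def ent (A : l2 →L[ℂ] l2) (j k : ℕ) : ℂ := ⟪ee j, A (ee k)⟫_ℂ

/-- The function `h_α(e^{iθ}) = exp(−α(1−e^{iθ})/(2(1+e^{iθ})))` on the circle. -/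
def hFun (α : ℝ) (θ : ℝ) : ℂ :=
  Complex.exp (-(α : ℂ) * (1 - Complex.exp (Complex.I * θ)) /
    (2 * (1 + Complex.exp (Complex.I * θ))))

/-!
The proof is the discrete form of the identity `H(h) H(h)* = I - T(h) T(h)*` for a unimodular symbol
`h`, where `T(h)` is the Toeplitz operator: its matrix entries are the orthonormality relations of
the shifted coefficient sequences of `h`, split at the index `0`. If `h` is inner, then
`T(h)* H(h) = 0`, because `h` has no coefficients of negative index; so `H(h) H(h)* H(h) = H(h)`.
The function `h_α` is inner, being the boundary function of a bounded holomorphic function on the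
disc, and its Fourier coefficients are real, so `H(h_α)* = H(h_α)`.
-/

open Metric Set
open scoped ComplexConjugate InnerProduct Topology Real

section FourierCoefficients

theorem circleMap_zero_mem_ball {r R : ℝ} (hr : |r| < R) (θ : ℝ) : circleMap 0 r θ ∈ ball 0 R := by
  simpa using hr

theorem circleMap_zero_two_pi_sub (r θ : ℝ) :
    circleMap 0 r (2 * π - θ) = conj (circleMap 0 r θ) := by
  rw [conj_circleMap_zero, sub_eq_neg_add, periodic_circleMap]

theorem fc_eq_integral_circleMap (f : ℝ → ℂ) (k : ℤ) :
    fc f k = ((1 / (2 * π) : ℝ) : ℂ) * ∫ θ in (0 : ℝ)..2 * π, f θ * circleMap 0 1 θ ^ (-k) := by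
  rw [fc]
  refine congrArg _ (intervalIntegral.integral_congr fun θ _ => ?_)
  simp only [circleMap_zero, Complex.ofReal_one, one_mul, ← Complex.exp_int_mul]
  congr 2
  push_cast
  ring

theorem fc_congr_ae {f g : ℝ → ℂ} (h : ∀ᵐ θ, f θ = g θ) (k : ℤ) : fc f k = fc g k := by
  rw [fc, fc]
  refine congrArg _ (intervalIntegral.integral_congr_ae ?_)
  filter_upwards [h] with θ hθ _
  rw [hθ]

theorem fc_mul_circleMap_zpow (f : ℝ → ℂ) (p l : ℤ) :
    fc (fun θ => f θ * circleMap 0 1 θ ^ (-p)) l = fc f (l + p) := by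
  simp only [fc_eq_integral_circleMap]
  refine congrArg _ (intervalIntegral.integral_congr fun θ _ => ?_)
  have hθ : circleMap 0 1 θ ≠ 0 := circleMap_ne_center one_ne_zero
  simp only [mul_assoc, ← zpow_add₀ hθ, neg_add_rev]

theorem conj_fc {f : ℝ → ℂ} (hf : ∀ θ, f (2 * π - θ) = conj (f θ)) (k : ℤ) :
    conj (fc f k) = fc f k := by
  simp only [fc_eq_integral_circleMap, map_mul, Complex.conj_ofReal,
    ← intervalIntegral.intervalIntegral_conj]
  have reflect := intervalIntegral.integral_comp_sub_left (a := 0) (b := 2 * π)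
    (fun θ => f θ * circleMap 0 1 θ ^ (-k)) (2 * π)
  rw [sub_self, sub_zero] at reflect
  rw [← reflect]
  refine congrArg _ (intervalIntegral.integral_congr fun θ _ => ?_)
  simp only [hf, circleMap_zero_two_pi_sub, map_zpow₀]

theorem tendsto_fc_of_dominated {ι : Type*} {l : Filter ι} [l.IsCountablyGenerated]
    {f : ι → ℝ → ℂ} {g : ℝ → ℂ} {C : ℝ} (hf : ∀ᶠ i in l, AEStronglyMeasurable (f i))
    (hC : ∀ᶠ i in l, ∀ᵐ θ, ‖f i θ‖ ≤ C) (hlim : ∀ᵐ θ, Tendsto (fun i => f i θ) l (𝓝 (g θ)))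
    (k : ℤ) : Tendsto (fun i => fc (f i) k) l (𝓝 (fc g k)) := by
  simp only [fc_eq_integral_circleMap]
  refine Tendsto.const_mul _ <|
    intervalIntegral.tendsto_integral_filter_of_dominated_convergence (fun _ => C) ?_ ?_
      intervalIntegrable_const ?_
  · filter_upwards [hf] with i hi
    exact (hi.mul ((measurable_circleMap 0 1).pow_const _).aestronglyMeasurable).restrict
  · filter_upwards [hC] with i hi
    filter_upwards [hi] with θ hθ _
    simpa using hθ
  · filter_upwards [hlim] with θ hθ _
    exact hθ.mul_const _

theorem fc_comp_circleMap_of_neg {F : ℂ → ℂ} {r : ℝ} (hr : 0 < r)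
    (hF : DiffContOnCl ℂ F (ball 0 r)) {k : ℤ} (hk : k < 0) :
    fc (fun θ => F (circleMap 0 r θ)) k = 0 := by
  obtain ⟨n, rfl⟩ : ∃ n : ℕ, k = -((n + 1 : ℕ) : ℤ) := ⟨(-k - 1).toNat, by omega⟩
  have cauchy : ∮ z in C(0, r), z ^ n * F z = 0 :=
    ((differentiable_pow n).diffContOnCl.smul hF).circleIntegral_eq_zero hr.le
  have hc : (r : ℂ) ^ (n + 1) * Complex.I ≠ 0 :=
    mul_ne_zero (pow_ne_zero _ (Complex.ofReal_ne_zero.2 hr.ne')) Complex.I_ne_zero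
  rw [fc_eq_integral_circleMap]
  refine mul_eq_zero_of_right _ ((mul_eq_zero.1 ?_).resolve_left hc)
  rw [circleIntegral] at cauchy
  rw [← intervalIntegral.integral_const_mul]
  refine (intervalIntegral.integral_congr fun θ _ => ?_).trans cauchy
  have hθ : circleMap 0 r θ = r * circleMap 0 1 θ := by simp [circleMap]
  simp only [deriv_circleMap, smul_eq_mul, neg_neg, zpow_natCast, hθ]
  ring

theorem fc_of_neg_of_tendsto_radial {F : ℂ → ℂ} {f : ℝ → ℂ} {C : ℝ}
    (hF : DifferentiableOn ℂ F (ball 0 1)) (hC : ∀ z ∈ ball 0 1, ‖F z‖ ≤ C)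
    (hlim : ∀ᵐ θ, Tendsto (fun r => F (circleMap 0 r θ)) (𝓝[<] 1) (𝓝 (f θ)))
    {k : ℤ} (hk : k < 0) : fc f k = 0 := by
  have hr : ∀ᶠ r : ℝ in 𝓝[<] 1, r ∈ Ioo 0 1 := Ioo_mem_nhdsLT zero_lt_one
  have mem_ball : ∀ {r : ℝ}, r ∈ Ioo 0 1 → ∀ θ, circleMap 0 r θ ∈ ball 0 1 := fun hr =>
    circleMap_zero_mem_ball ((abs_of_pos hr.1).trans_lt hr.2)
  have hzero : ∀ᶠ r : ℝ in 𝓝[<] 1, fc (fun θ => F (circleMap 0 r θ)) k = 0 := by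
    filter_upwards [hr] with r hr
    exact fc_comp_circleMap_of_neg hr.1
      ((hF.mono (closedBall_subset_ball hr.2)).diffContOnCl_ball subset_rfl) hk
  refine tendsto_nhds_unique (tendsto_fc_of_dominated (C := C) ?_ ?_ hlim k)
    ((tendsto_congr' hzero).2 tendsto_const_nhds)
  · filter_upwards [hr] with r hr
    exact (hF.continuousOn.comp_continuous (continuous_circleMap 0 r)
      (mem_ball hr)).aestronglyMeasurable
  · filter_upwards [hr] with r hr
    exact Eventually.of_forall fun θ => hC _ (mem_ball hr θ)

end FourierCoefficients

section Parseval

theorem hasSum_conj_fourierCoeff_mul {T : ℝ} [Fact (0 < T)] {f g : AddCircle T → ℂ}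
    (hf : MemLp f 2 AddCircle.haarAddCircle) (hg : MemLp g 2 AddCircle.haarAddCircle) :
    HasSum (fun l : ℤ => conj (fourierCoeff f l) * fourierCoeff g l)
      (fourierCoeff (fun x => conj (f x) * g x) 0) := by
  have coeff : ∀ {u : AddCircle T → ℂ} (hu : MemLp u 2 AddCircle.haarAddCircle) (l : ℤ),
      ⟪fourierBasis l, hu.toLp⟫_ℂ = fourierCoeff u l := fun hu l => by
    rw [← HilbertBasis.repr_apply_apply, fourierBasis_repr, fourierCoeff_congr_ae hu.coeFn_toLp]
  have inner_eq : ⟪hf.toLp, hg.toLp⟫_ℂ = fourierCoeff (fun x => conj (f x) * g x) 0 := by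
    rw [L2.inner_def, fourierCoeff]
    refine integral_congr_ae ?_
    filter_upwards [hf.coeFn_toLp, hg.coeFn_toLp] with x hfx hgx
    simp [hfx, hgx, mul_comm]
  rw [← inner_eq]
  refine (fourierBasis.hasSum_inner_mul_inner hf.toLp hg.toLp).congr_fun fun l => ?_
  rw [← inner_conj_symm, coeff, coeff]

local instance : Fact (0 < 2 * π) := ⟨Real.two_pi_pos⟩

theorem fourierCoeff_liftIoc_eq_fc (f : ℝ → ℂ) (k : ℤ) :
    fourierCoeff (AddCircle.liftIoc (2 * π) 0 f) k = fc f k := by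
  rw [fourierCoeff_liftIoc_eq, fourierCoeffOn_eq_integral, fc_eq_integral_circleMap,
    Complex.real_smul]
  simp only [zero_add, sub_zero, smul_eq_mul]
  refine congrArg _ (intervalIntegral.integral_congr fun θ _ => ?_)
  have hπ : (π : ℂ) ≠ 0 := Complex.ofReal_ne_zero.2 Real.pi_ne_zero
  simp only [fourier_coe_apply, circleMap_zero, Complex.ofReal_one, one_mul, ← Complex.exp_int_mul]
  rw [mul_comm]
  congr 2
  push_cast
  rw [zero_add, sub_zero]
  field_simp

theorem hasSum_conj_fc_mul {f g : ℝ → ℂ} (hf : MemLp f 2 (volume.restrict (Ioc 0 (2 * π))))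
    (hg : MemLp g 2 (volume.restrict (Ioc 0 (2 * π)))) :
    HasSum (fun l : ℤ => conj (fc f l) * fc g l) (fc (fun θ => conj (f θ) * g θ) 0) := by
  rw [← zero_add (2 * π)] at hf hg
  simp only [← fourierCoeff_liftIoc_eq_fc]
  exact hasSum_conj_fourierCoeff_mul hf.memLp_liftIoc.haarAddCircle hg.memLp_liftIoc.haarAddCircle

theorem fc_one (k : ℤ) : fc (fun _ => 1) k = if k = 0 then 1 else 0 := by
  have lift_one : AddCircle.liftIoc (2 * π) 0 (fun _ => (1 : ℂ)) = fourier 0 := by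
    ext x
    rw [fourier_zero]
    rfl
  rw [← fourierCoeff_liftIoc_eq_fc, lift_one, fourierCoeff_fourier, Pi.single_apply]

/-- The shifts `(c (l + p))_l`, `p ∈ ℤ`, of a bilateral sequence `c` are orthonormal in `ℓ²(ℤ)`. For
the sequence of Fourier coefficients of `f` this expresses that `f` is unimodular. -/
def HasOrthonormalShifts (c : ℤ → ℂ) : Prop :=
  ∀ p q : ℤ, HasSum (fun l => conj (c (l + p)) * c (l + q)) (if p = q then 1 else 0)

theorem hasOrthonormalShifts_fc {f : ℝ → ℂ} (hf : AEStronglyMeasurable f)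
    (hf1 : ∀ᵐ θ, ‖f θ‖ = 1) : HasOrthonormalShifts (fc f) := by
  intro p q
  have memLp_modulated : ∀ m : ℤ, MemLp (fun θ => f θ * circleMap 0 1 θ ^ (-m)) 2
      (volume.restrict (Ioc 0 (2 * π))) := fun m => by
    have meas := hf.mul ((measurable_circleMap 0 1).pow_const (-m)).aestronglyMeasurable
    refine MemLp.of_bound meas.restrict 1 (ae_restrict_of_ae ?_)
    filter_upwards [hf1] with θ hθ
    simp [hθ]
  have product : ∀ᵐ θ, conj (f θ * circleMap 0 1 θ ^ (-p)) * (f θ * circleMap 0 1 θ ^ (-q)) =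
      1 * circleMap 0 1 θ ^ (-(q - p)) := by
    filter_upwards [hf1] with θ hθ
    have hf_conj : conj (f θ) * f θ = 1 := by simp [Complex.conj_mul', hθ]
    have hne : circleMap 0 1 θ ≠ 0 := circleMap_ne_center one_ne_zero
    have hconj : conj (circleMap 0 1 θ) = (circleMap 0 1 θ)⁻¹ := by
      rw [conj_circleMap_zero, circleMap_zero_inv, inv_one]
    rw [map_mul, map_zpow₀, hconj, inv_zpow, zpow_neg, inv_inv, neg_sub, sub_eq_add_neg,
      zpow_add₀ hne]
    linear_combination (circleMap 0 1 θ ^ p * circleMap 0 1 θ ^ (-q)) * hf_conj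
  have parseval := hasSum_conj_fc_mul (memLp_modulated p) (memLp_modulated q)
  simpa only [fc_mul_circleMap_zpow, fc_congr_ae product, zero_add, fc_one, sub_eq_zero,
    eq_comm (a := q)] using parseval

end Parseval

section MatrixEntries

theorem ent_eq_apply (A : l2 →L[ℂ] l2) (j k : ℕ) : ent A j k = A (ee k) j := by
  simp [ent, ee, lp.inner_single_left]

theorem ent_adjoint (A : l2 →L[ℂ] l2) (j k : ℕ) : ent (A†) j k = conj (ent A k j) := by
  rw [ent, ent, ContinuousLinearMap.adjoint_inner_right, inner_conj_symm]

theorem hasSum_ent_mul_apply (A : l2 →L[ℂ] l2) (j : ℕ) (v : l2) :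
    HasSum (fun k => ent A j k * v k) (A v j) := by
  have hj : ⟪(A†) (ee j), v⟫_ℂ = A v j := by
    rw [ContinuousLinearMap.adjoint_inner_left]
    simp [ee, lp.inner_single_left]
  rw [← hj]
  refine (lp.hasSum_inner ((A†) (ee j)) v).congr_fun fun k => ?_
  rw [RCLike.inner_apply, ← ent_eq_apply, ent_adjoint, Complex.conj_conj, mul_comm]

theorem hasSum_ent_mul_ent (A B : l2 →L[ℂ] l2) (j k : ℕ) :
    HasSum (fun l => ent A j l * ent B l k) (ent (A ∘L B) j k) := by
  simpa only [ent_eq_apply B, ent_eq_apply (A ∘L B), ContinuousLinearMap.comp_apply]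
    using hasSum_ent_mul_apply A j (B (ee k))

theorem ext_ent {A B : l2 →L[ℂ] l2} (h : ∀ j k, ent A j k = ent B j k) : A = B := by
  ext v j
  refine (hasSum_ent_mul_apply A j v).unique ?_
  simpa only [h] using hasSum_ent_mul_apply B j v

end MatrixEntries

section Hankel

/-- `A` is the Hankel operator `(c (j + k + 1))_{j,k}` on `ℓ²(ℕ)`, for a bilateral sequence `c`
that plays the role of the Fourier coefficients of the symbol. -/
def IsHankel (c : ℤ → ℂ) (A : l2 →L[ℂ] l2) : Prop :=
  ∀ j k : ℕ, ent A j k = c ((j : ℤ) + k + 1)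

namespace IsHankel

variable {c : ℤ → ℂ} {A : l2 →L[ℂ] l2}

theorem adjoint_eq_self (hA : IsHankel c A) (hreal : ∀ k, conj (c k) = c k) : A† = A :=
  ext_ent fun j k => by rw [ent_adjoint, hA, hA, hreal, add_comm (k : ℤ)]

theorem ent_comp_adjoint (hA : IsHankel c A) (hneg : ∀ k < 0, c k = 0)
    (hc : HasOrthonormalShifts c) (j k : ℕ) :
    ent (A ∘L A†) j k =
      (if j = k then 1 else 0) - ∑ i ∈ Finset.range (j + 1), c (j - i) * conj (c (k - i)) := by
  let f : ℤ → ℂ := fun l => conj (c (l + (k + 1))) * c (l + (j + 1))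
  have nonneg_part : HasSum (fun l : ℕ => f l) (ent (A ∘L A†) j k) := by
    refine (hasSum_ent_mul_ent A (A†) j k).congr_fun fun l => ?_
    rw [ent_adjoint, hA, hA, mul_comm]
    grind
  have neg_part : HasSum (fun i : ℕ => f (-(i + 1)))
      (∑ i ∈ Finset.range (j + 1), c (j - i) * conj (c (k - i))) := by
    have hf : ∀ i : ℕ, f (-(i + 1)) = c (j - i) * conj (c (k - i)) := fun i => by grind
    simp only [hf]
    refine hasSum_sum_of_ne_finset_zero fun i hi => ?_
    rw [Finset.mem_range] at hi
    rw [hneg _ (by omega), zero_mul]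
  have total := (HasSum.of_nat_of_neg_add_one nonneg_part neg_part).unique (hc _ _)
  rw [eq_sub_iff_add_eq, total]
  simp [eq_comm]

theorem hasSum_conj_mul_ent (hA : IsHankel c A) (hneg : ∀ k < 0, c k = 0)
    (hc : HasOrthonormalShifts c) (i m : ℕ) :
    HasSum (fun k : ℕ => conj (c (k - i)) * ent A k m) 0 := by
  have orthogonal := hc (-i) (m + 1)
  rw [if_neg (by omega), ← Nat.cast_injective.hasSum_iff (g := ((↑) : ℕ → ℤ))] at orthogonal
  · simpa only [Function.comp_def, ← sub_eq_add_neg, ← add_assoc, hA _ _] using orthogonal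
  · intro l hl
    have hl_neg : l < 0 := by
      by_contra! h
      exact hl ⟨l.toNat, Int.toNat_of_nonneg h⟩
    rw [hneg _ (by omega), map_zero, zero_mul]

theorem comp_adjoint_comp_self (hA : IsHankel c A) (hneg : ∀ k < 0, c k = 0)
    (hc : HasOrthonormalShifts c) : A ∘L A† ∘L A = A := by
  rw [← ContinuousLinearMap.comp_assoc]
  refine ext_ent fun j m => (hasSum_ent_mul_ent (A ∘L A†) A j m).unique ?_
  have diagonal : HasSum (fun k => (if j = k then 1 else 0) * ent A k m) (ent A j m) := by
    simpa using hasSum_single (f := fun k => (if j = k then 1 else 0) * ent A k m) j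
      fun k hk => by simp [hk.symm]
  have correction : HasSum (fun k : ℕ => ∑ i ∈ Finset.range (j + 1),
      c (j - i) * (conj (c (k - i)) * ent A k m)) 0 := by
    simpa using hasSum_sum (s := Finset.range (j + 1))
      fun i _ => (hA.hasSum_conj_mul_ent hneg hc i m).mul_left (c (j - i))
  simpa only [hA.ent_comp_adjoint hneg hc, sub_mul, Finset.sum_mul, mul_assoc, sub_zero]
    using diagonal.sub correction

end IsHankel

end Hankel

section InnerFunction

/-- `F` is an inner function on the unit disc, with boundary function `f` in the angle variable. -/
structure IsInner (F : ℂ → ℂ) (f : ℝ → ℂ) : Prop where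
  differentiableOn : DifferentiableOn ℂ F (ball 0 1)
  norm_le_one : ∀ z ∈ ball 0 1, ‖F z‖ ≤ 1
  tendsto_radial : ∀ᵐ θ, Tendsto (fun r => F (circleMap 0 r θ)) (𝓝[<] 1) (𝓝 (f θ))
  norm_boundary : ∀ᵐ θ, ‖f θ‖ = 1

namespace IsInner

variable {F : ℂ → ℂ} {f : ℝ → ℂ}

theorem aestronglyMeasurable (h : IsInner F f) : AEStronglyMeasurable f := by
  obtain ⟨u, -, hu, hu_lim⟩ := exists_seq_strictMono_tendsto' (zero_lt_one (α := ℝ))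
  have hu_left : Tendsto u atTop (𝓝[<] 1) :=
    tendsto_nhdsWithin_iff.2 ⟨hu_lim, Eventually.of_forall fun n => (hu n).2⟩
  refine aestronglyMeasurable_of_tendsto_ae atTop (f := fun n θ => F (circleMap 0 (u n) θ))
    (fun n => ?_) (h.tendsto_radial.mono fun θ hθ => hθ.comp hu_left)
  have mem_ball := circleMap_zero_mem_ball ((abs_of_pos (hu n).1).trans_lt (hu n).2)
  exact (h.differentiableOn.continuousOn.comp_continuous (continuous_circleMap 0 (u n))
    mem_ball).aestronglyMeasurable

theorem fc_of_neg (h : IsInner F f) {k : ℤ} (hk : k < 0) : fc f k = 0 :=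
  fc_of_neg_of_tendsto_radial h.differentiableOn h.norm_le_one h.tendsto_radial hk

theorem hankel_comp_adjoint_comp_self (h : IsInner F f) {A : l2 →L[ℂ] l2}
    (hA : IsHankel (fc f) A) : A ∘L A† ∘L A = A :=
  hA.comp_adjoint_comp_self (fun _ => h.fc_of_neg)
    (hasOrthonormalShifts_fc h.aestronglyMeasurable h.norm_boundary)

end IsInner

/-- For `α > 0`, the singular inner function with mass at `-1`; its boundary function is `h_α`.
At the singular point itself the division by zero gives the value `1`. -/
def singularInner (α : ℝ) (z : ℂ) : ℂ :=
  Complex.exp (-(α : ℂ) * (1 - z) / (2 * (1 + z)))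

theorem hFun_eq_singularInner (α θ : ℝ) : hFun α θ = singularInner α (circleMap 0 1 θ) := by
  simp only [hFun, singularInner, circleMap_zero, Complex.ofReal_one, one_mul,
    mul_comm Complex.I]

theorem norm_singularInner (α : ℝ) (z : ℂ) :
    ‖singularInner α z‖ = Real.exp (-(α / 2) * ((1 - ‖z‖ ^ 2) / ‖1 + z‖ ^ 2)) := by
  have cayley : ((1 - z) / (1 + z)).re = (1 - ‖z‖ ^ 2) / ‖1 + z‖ ^ 2 := by
    simp only [Complex.div_re, ← add_div, ← Complex.normSq_eq_norm_sq]
    congr 1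
    simp only [Complex.normSq_apply, Complex.sub_re, Complex.sub_im, Complex.add_re,
      Complex.add_im, Complex.one_re, Complex.one_im]
    ring
  have factor : -(α : ℂ) * (1 - z) / (2 * (1 + z)) =
      ((-(α / 2) : ℝ) : ℂ) * ((1 - z) / (1 + z)) := by
    rw [mul_div_mul_comm]
    push_cast
    ring
  rw [singularInner, Complex.norm_exp, factor, Complex.re_ofReal_mul, cayley]

theorem norm_singularInner_le_one {α : ℝ} (hα : 0 ≤ α) {z : ℂ} (hz : ‖z‖ ≤ 1) :
    ‖singularInner α z‖ ≤ 1 := by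
  have hz_sq : 0 ≤ 1 - ‖z‖ ^ 2 := sub_nonneg.2 (pow_le_one₀ (norm_nonneg z) hz)
  rw [norm_singularInner, Real.exp_le_one_iff, neg_mul, neg_nonpos]
  positivity

theorem differentiableAt_singularInner (α : ℝ) {z : ℂ} (hz : z ≠ -1) :
    DifferentiableAt ℂ (singularInner α) z := by
  have hz' : 2 * (1 + z) ≠ 0 :=
    mul_ne_zero two_ne_zero fun h => hz (eq_neg_of_add_eq_zero_right h)
  unfold singularInner
  fun_prop (disch := assumption)

theorem singularInner_conj (α : ℝ) (z : ℂ) :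
    singularInner α (conj z) = conj (singularInner α z) := by
  simp [singularInner, ← Complex.exp_conj, Complex.conj_ofNat]

theorem isInner_singularInner {α : ℝ} (hα : 0 ≤ α) : IsInner (singularInner α) (hFun α) where
  differentiableOn z hz := by
    refine (differentiableAt_singularInner α ?_).differentiableWithinAt
    rintro rfl
    simp at hz
  norm_le_one z hz := norm_singularInner_le_one hα (mem_ball_zero_iff.1 hz).le
  tendsto_radial := by
    have hne : ∀ᵐ θ, circleMap 0 1 θ ≠ -1 :=
      ((countable_singleton (-1 : ℂ)).preimage_circleMap 0 one_ne_zero).ae_notMem volume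
    filter_upwards [hne] with θ hθ
    have hcont : Continuous fun r : ℝ => circleMap 0 r θ := by
      unfold circleMap
      fun_prop
    rw [hFun_eq_singularInner]
    exact ((differentiableAt_singularInner α hθ).continuousAt.tendsto.comp
      (hcont.tendsto 1)).mono_left nhdsWithin_le_nhds
  norm_boundary := Eventually.of_forall fun θ => by
    simp [hFun_eq_singularInner, norm_singularInner]

theorem hFun_two_pi_sub (α θ : ℝ) : hFun α (2 * π - θ) = conj (hFun α θ) := by
  rw [hFun_eq_singularInner, hFun_eq_singularInner, ← singularInner_conj,
    circleMap_zero_two_pi_sub]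

end InnerFunction

theorem stmt15_general {F : ℂ → ℂ} {f : ℝ → ℂ} (hf : IsInner F f)
    (hsymm : ∀ θ, f (2 * π - θ) = conj (f θ)) {A : l2 →L[ℂ] l2} (hA : IsHankel (fc f) A) :
    A ∘L A ∘L A = A ∧ (A ∘L A) ∘L (A ∘L A) = A ∘L A := by
  have cube : A ∘L A† ∘L A = A := hf.hankel_comp_adjoint_comp_self hA
  rw [hA.adjoint_eq_self (conj_fc hsymm)] at cube
  exact ⟨cube, by rw [ContinuousLinearMap.comp_assoc, cube]⟩

/-- For `α > 0`, the Hankel operator `A = H(h_α)` on ℓ²(ℕ) satisfies `A³ = A`;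
in particular `A²` is idempotent. -/
theorem stmt15 (α : ℝ) (hα : 0 < α) (A : l2 →L[ℂ] l2)
    (hA : ∀ j k : ℕ, ent A j k = fc (hFun α) ((j : ℤ) + k + 1)) :
    A ∘L A ∘L A = A ∧ (A ∘L A) ∘L (A ∘L A) = A ∘L A :=
  stmt15_general (isInner_singularInner hα.le) (hFun_two_pi_sub α) hA

end
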